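/- Let r be a positive integer. Then there exists a strictly increasing sequence (a_n)_{n≥1} of positive integers with E(A_N) = Θ( N³ / ( log(N) · log₂(N) · … · log_r(N) ) ) such that NPPC((a_n)_n) has full Lebesgue measure in [0,1]. Here log_r denotes the r-fold iterated logarithm, log_r(x) := log_{r−1}(log x) and log₁(x) := log x. -/

import Mathlib

open Filter MeasureTheory
open scoped Classical

/-- Distance from a real number to the nearest integer. -/
noncomputable def dni (x : ℝ) : ℝ := |x - round x|

/-- Additive energy of a finite set of naturals:
`#{(a,b,c,d) ∈ I⁴ : a + b = c + d}`. -/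
def addEnergy (A : Finset ℕ) : ℕ :=
  (((A ×ˢ A) ×ˢ (A ×ˢ A)).filter fun q => q.1.1 + q.1.2 = q.2.1 + q.2.2).card

/-- The truncation `A_N = {a_n : 1 ≤ n ≤ N}`. -/
def trunc (a : ℕ → ℕ) (N : ℕ) : Finset ℕ := (Finset.Icc 1 N).image a

/-- Pair correlation function `R([-s,s], α, N)`. -/
noncomputable def pcf (a : ℕ → ℕ) (s α : ℝ) (N : ℕ) : ℝ :=
  (((Finset.Icc 1 N ×ˢ Finset.Icc 1 N).filter fun p =>
      p.1 ≠ p.2 ∧ dni (α * (a p.1 : ℝ) - α * (a p.2 : ℝ)) ≤ s / N).card : ℝ) / N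

/-- `(α a_n)_n` has Poissonian pair correlations. -/
def hasPPC (a : ℕ → ℕ) (α : ℝ) : Prop :=
  ∀ s : ℝ, 0 ≤ s → Tendsto (fun N => pcf a s α N) atTop (nhds (2 * s))

/-- The exceptional set `NPPC((a_n)_n)` of `α ∈ (0,1)` without PPC. -/
def NPPC (a : ℕ → ℕ) : Set ℝ := {α | α ∈ Set.Ioo (0 : ℝ) 1 ∧ ¬ hasPPC a α}

/-- `iterLog r x` is the `r`-fold iterated logarithm `log_r(x)`;
`iterLog 0 x = x`, `iterLog 1 x = log x`, `iterLog (r+1) x = iterLog r (log x)`. -/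
noncomputable def iterLog : ℕ → ℝ → ℝ
  | 0, x => x
  | n + 1, x => iterLog n (Real.log x)

/-- The first index of the group of `n`: in the dyadic block `[2 ^ j, 2 ^ (j + 1))` the first
`2 * m j` indices form one group, and all others are singletons. -/
def groupStart (m : ℕ → ℕ) (n : ℕ) : ℕ :=
  if n < 2 ^ Nat.log 2 n + 2 * m (Nat.log 2 n) then 2 ^ Nat.log 2 n else n

/-- A rapidly growing sequence of scales, one for each group. -/
def groupScale (k : ℕ) : ℕ := 2 ^ k ^ 2

/-- The sequence that runs through an arithmetic progression of length `2 * m j` at the beginning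
of the `j`-th dyadic block and is extremely sparse elsewhere. -/
def blockSeq (m : ℕ → ℕ) (n : ℕ) : ℕ :=
  groupScale (groupStart m n) * (2 * groupStart m n + n)

/-- The arithmetic progression in the `j`-th dyadic block of `blockSeq m`. -/
def blockProg (m : ℕ → ℕ) (j : ℕ) : Finset ℕ :=
  (Finset.Ico (2 ^ j) (2 ^ j + 2 * m j)).image (blockSeq m)

section Combinatorics

variable {m : ℕ → ℕ}

lemma groupScale_pos (k : ℕ) : 0 < groupScale k := by
  unfold groupScale; positivity

lemma four_mul_groupScale_lt {k l : ℕ} (h : k < l) : 4 * k * groupScale k < groupScale l := by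
  have h1 : groupScale (k + 1) ≤ groupScale l :=
    Nat.pow_le_pow_right (by norm_num) (Nat.pow_le_pow_left h 2)
  have h2 : groupScale (k + 1) = 2 ^ (2 * k + 1) * groupScale k := by
    unfold groupScale; rw [← pow_add]; congr 1; ring
  have h3 : 4 * k < 2 ^ (2 * k + 1) := by
    have h4 : k < 2 ^ k := Nat.lt_two_pow_self
    have h5 : 1 ≤ 2 ^ k := Nat.one_le_two_pow
    have h6 : 2 ^ (2 * k + 1) = 2 * (2 ^ k) ^ 2 := by rw [pow_succ, pow_mul']; ring
    rw [h6]
    rcases Nat.lt_or_ge k 2 with hk | hk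
    · interval_cases k <;> norm_num
    · nlinarith
  calc 4 * k * groupScale k < 2 ^ (2 * k + 1) * groupScale k :=
        Nat.mul_lt_mul_of_pos_right h3 (groupScale_pos k)
    _ ≤ groupScale l := h2 ▸ h1

lemma groupStart_pos {n : ℕ} (hn : 1 ≤ n) : 1 ≤ groupStart m n := by
  unfold groupStart; split_ifs
  · exact Nat.one_le_two_pow
  · exact hn

lemma groupStart_le {n : ℕ} (hn : 1 ≤ n) : groupStart m n ≤ n := by
  unfold groupStart; split_ifs
  · exact Nat.pow_log_le_self 2 (by omega)
  · exact le_rfl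

lemma lt_two_mul_groupStart {n : ℕ} (hn : 1 ≤ n) : n < 2 * groupStart m n := by
  unfold groupStart; split_ifs
  · have := Nat.lt_pow_succ_log_self (b := 2) (by norm_num) n
    rw [pow_succ] at this; omega
  · omega

lemma groupStart_mono_succ {n : ℕ} (hn : 1 ≤ n) :
    groupStart m n ≤ groupStart m (n + 1) := by
  have hle : Nat.log 2 n ≤ Nat.log 2 (n + 1) := Nat.log_mono_right (Nat.le_succ n)
  rcases hle.eq_or_lt with h | h
  · have h1 : 2 ^ Nat.log 2 n ≤ n := Nat.pow_log_le_self 2 (by omega)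
    unfold groupStart
    rw [← h]
    split_ifs <;> omega
  · have h1 : n < 2 ^ (Nat.log 2 n + 1) := Nat.lt_pow_succ_log_self (by norm_num) n
    have h2 : 2 ^ (Nat.log 2 n + 1) ≤ 2 ^ Nat.log 2 (n + 1) :=
      Nat.pow_le_pow_right (by norm_num) h
    have h3 : groupStart m n ≤ n := groupStart_le hn
    have h4 : 2 ^ Nat.log 2 (n + 1) ≤ n + 1 := Nat.pow_log_le_self 2 (by omega)
    unfold groupStart at h3 ⊢
    split_ifs at h3 ⊢ <;> omega

lemma groupStart_eq_of_mem {n j : ℕ} (hm : 2 * m j ≤ 2 ^ j)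
    (hn : n ∈ Finset.Ico (2 ^ j) (2 ^ j + 2 * m j)) : groupStart m n = 2 ^ j := by
  rw [Finset.mem_Ico] at hn
  have : Nat.log 2 n = j :=
    Nat.log_eq_of_pow_le_of_lt_pow hn.1 (by rw [pow_succ]; omega)
  unfold groupStart
  rw [this, if_pos hn.2]

lemma eq_groupStart_or_mem {n : ℕ} (hn : 1 ≤ n) :
    n = groupStart m n ∨ (groupStart m n = 2 ^ Nat.log 2 n ∧
      n ∈ Finset.Ico (2 ^ Nat.log 2 n) (2 ^ Nat.log 2 n + 2 * m (Nat.log 2 n))) := by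
  by_cases h : n < 2 ^ Nat.log 2 n + 2 * m (Nat.log 2 n)
  · right
    refine ⟨by unfold groupStart; rw [if_pos h], ?_⟩
    rw [Finset.mem_Ico]
    exact ⟨Nat.pow_log_le_self 2 (by omega), h⟩
  · left; unfold groupStart; rw [if_neg h]

lemma le_blockSeq {n : ℕ} (hn : 1 ≤ n) :
    3 * groupStart m n * groupScale (groupStart m n) ≤ blockSeq m n := by
  have := groupStart_le (m := m) hn
  unfold blockSeq
  rw [mul_comm]
  exact Nat.mul_le_mul_left _ (by omega)

lemma blockSeq_lt {n : ℕ} (hn : 1 ≤ n) :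
    blockSeq m n < 4 * groupStart m n * groupScale (groupStart m n) := by
  have := lt_two_mul_groupStart (m := m) hn
  unfold blockSeq
  rw [mul_comm (4 * _)]
  exact Nat.mul_lt_mul_of_pos_left (by omega) (groupScale_pos _)

lemma blockSeq_lt_groupScale {n k : ℕ} (hn : 1 ≤ n) (h : groupStart m n < k) :
    blockSeq m n < groupScale k :=
  (blockSeq_lt hn).trans (four_mul_groupScale_lt h)

lemma groupScale_le_blockSeq {n : ℕ} (hn : 1 ≤ n) :
    groupScale (groupStart m n) ≤ blockSeq m n := by
  have h1 := le_blockSeq (m := m) hn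
  have h2 := groupStart_pos (m := m) hn
  nlinarith [groupScale_pos (groupStart m n)]

lemma blockSeq_lt_succ {n : ℕ} (hn : 1 ≤ n) : blockSeq m n < blockSeq m (n + 1) := by
  rcases (groupStart_mono_succ (m := m) hn).eq_or_lt with h | h
  · unfold blockSeq
    rw [← h]
    exact Nat.mul_lt_mul_of_pos_left (by omega) (groupScale_pos _)
  · exact (blockSeq_lt_groupScale hn h).trans_le (groupScale_le_blockSeq (by omega))

lemma blockSeq_strictMonoOn : StrictMonoOn (blockSeq m) (Set.Ici 1) := by
  intro x hx y hy hxy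
  have hx' : 1 ≤ x := hx
  induction y, hxy using Nat.le_induction with
  | base => exact blockSeq_lt_succ hx'
  | succ y hy' ih =>
    have : 1 ≤ y := by omega
    exact (ih this).trans (blockSeq_lt_succ this)

lemma blockSeq_injOn : Set.InjOn (blockSeq m) (Set.Ici 1) :=
  blockSeq_strictMonoOn.injOn

lemma eq_of_blockSeq_add_eq {x u v w : ℕ} (hv : 1 ≤ v) (hw : 1 ≤ w)
    (hu : groupStart m u = groupStart m x) (hvx : groupStart m v < groupStart m x)
    (hwx : groupStart m w < groupStart m x)
    (he : blockSeq m x + blockSeq m v = blockSeq m u + blockSeq m w) : x = u ∧ v = w := by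
  have h1 := blockSeq_lt_groupScale hv hvx
  have h2 := blockSeq_lt_groupScale hw hwx
  have hxu : x = u := by
    have ex : blockSeq m x = groupScale (groupStart m x) * (2 * groupStart m x + x) := rfl
    have eu : blockSeq m u = groupScale (groupStart m x) * (2 * groupStart m x + u) := by
      rw [← hu]; rfl
    rw [ex, eu, mul_add, mul_add] at he
    rcases lt_trichotomy x u with hlt | heq | hlt
    · have := Nat.mul_le_mul_left (groupScale (groupStart m x)) (Nat.succ_le_of_lt hlt)
      rw [Nat.mul_succ] at this
      omega
    · exact heq
    · have := Nat.mul_le_mul_left (groupScale (groupStart m x)) (Nat.succ_le_of_lt hlt)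
      rw [Nat.mul_succ] at this
      omega
  subst hxu
  exact ⟨rfl, blockSeq_injOn hv hw (Nat.add_left_cancel he)⟩

lemma blockSeq_add_eq_add_of_max {x y z w : ℕ} (hx : 1 ≤ x) (hy : 1 ≤ y) (hz : 1 ≤ z) (hw : 1 ≤ w)
    (h : blockSeq m x + blockSeq m y = blockSeq m z + blockSeq m w)
    (hxy : groupStart m y ≤ groupStart m x) (hxz : groupStart m z ≤ groupStart m x)
    (hxw : groupStart m w ≤ groupStart m x) :
    (x = z ∧ y = w) ∨ (x = w ∧ y = z) ∨ (groupStart m y = groupStart m x ∧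
      groupStart m z = groupStart m x ∧ groupStart m w = groupStart m x) := by
  have lx := le_blockSeq (m := m) hx
  have ux := blockSeq_lt (m := m) hx
  have ly := le_blockSeq (m := m) hy
  have lz := le_blockSeq (m := m) hz
  have uz := blockSeq_lt (m := m) hz
  have lw := le_blockSeq (m := m) hw
  have uw := blockSeq_lt (m := m) hw
  have hpos := groupStart_pos (m := m) hx
  have hkD : groupScale (groupStart m x) ≤ groupStart m x * groupScale (groupStart m x) :=
    Nat.le_mul_of_pos_left _ hpos
  rcases hxy.eq_or_lt with ey | sy <;> rcases hxz.eq_or_lt with ez | sz <;>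
    rcases hxw.eq_or_lt with ew | sw
  · exact Or.inr (Or.inr ⟨ey, ez, ew⟩)
  · have := blockSeq_lt_groupScale hw sw
    rw [ey] at ly; rw [ez] at lz uz
    linarith
  · have := blockSeq_lt_groupScale hz sz
    rw [ey] at ly; rw [ew] at lw uw
    linarith
  · have := blockSeq_lt_groupScale hz sz
    have := blockSeq_lt_groupScale hw sw
    linarith
  · have := blockSeq_lt_groupScale hy sy
    rw [ez] at lz; rw [ew] at lw
    linarith
  · exact Or.inl (eq_of_blockSeq_add_eq hy hw ez sy sw h)
  · exact Or.inr (Or.inl (eq_of_blockSeq_add_eq hy hz ew sy sz (by omega)))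
  · have := blockSeq_lt_groupScale hz sz
    have := blockSeq_lt_groupScale hw sw
    linarith

lemma blockSeq_add_eq_add {x y z w : ℕ} (hx : 1 ≤ x) (hy : 1 ≤ y) (hz : 1 ≤ z) (hw : 1 ≤ w)
    (h : blockSeq m x + blockSeq m y = blockSeq m z + blockSeq m w) :
    (x = z ∧ y = w) ∨ (x = w ∧ y = z) ∨ (groupStart m y = groupStart m x ∧
      groupStart m z = groupStart m x ∧ groupStart m w = groupStart m x) := by
  set kx := groupStart m x with hkx
  set ky := groupStart m y with hky
  set kz := groupStart m z with hkz
  set kw := groupStart m w with hkw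
  have hmax : (ky ≤ kx ∧ kz ≤ kx ∧ kw ≤ kx) ∨ (kx ≤ ky ∧ kz ≤ ky ∧ kw ≤ ky) ∨
      (kx ≤ kz ∧ ky ≤ kz ∧ kw ≤ kz) ∨ (kx ≤ kw ∧ ky ≤ kw ∧ kz ≤ kw) := by omega
  rcases hmax with ⟨h1, h2, h3⟩ | ⟨h1, h2, h3⟩ | ⟨h1, h2, h3⟩ | ⟨h1, h2, h3⟩
  · have := blockSeq_add_eq_add_of_max hx hy hz hw h h1 h2 h3
    omega
  · have := blockSeq_add_eq_add_of_max hy hx hz hw (by omega) h1 h2 h3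
    omega
  · have := blockSeq_add_eq_add_of_max hz hw hx hy (by omega) h3 h1 h2
    omega
  · have := blockSeq_add_eq_add_of_max hw hz hx hy (by omega) h3 h1 h2
    omega

lemma mem_block_of_groupStart_eq {x y : ℕ} (hx : 1 ≤ x) (hy : 1 ≤ y) (hxy : x ≠ y)
    (h : groupStart m y = groupStart m x) :
    groupStart m x = 2 ^ Nat.log 2 x ∧
      x ∈ Finset.Ico (2 ^ Nat.log 2 x) (2 ^ Nat.log 2 x + 2 * m (Nat.log 2 x)) := by
  rcases eq_groupStart_or_mem (m := m) hx with h1 | h1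
  · rcases eq_groupStart_or_mem (m := m) hy with h2 | h2
    · omega
    · have hlog : Nat.log 2 x = Nat.log 2 y := by
        rw [h1, ← h, h2.1, Nat.log_pow (by norm_num)]
      have hxe : x = 2 ^ Nat.log 2 x := by rw [hlog, ← h2.1, h, ← h1]
      have h3 := h2.2
      rw [Finset.mem_Ico, ← hlog] at h3
      refine ⟨by rw [← h1]; exact hxe, ?_⟩
      rw [Finset.mem_Ico]
      omega
  · exact h1

lemma card_trunc_le (a : ℕ → ℕ) (N : ℕ) : (trunc a N).card ≤ N := by
  unfold trunc
  exact Finset.card_image_le.trans (by simp)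

lemma addEnergy_mono {A B : Finset ℕ} (h : A ⊆ B) : addEnergy A ≤ addEnergy B := by
  unfold addEnergy
  exact Finset.card_le_card (Finset.filter_subset_filter _
    (Finset.product_subset_product (Finset.product_subset_product h h)
      (Finset.product_subset_product h h)))

lemma addEnergy_le_card_cube (A : Finset ℕ) : addEnergy A ≤ A.card ^ 3 := by
  have : addEnergy A ≤ ((A ×ˢ A) ×ˢ A).card := by
    unfold addEnergy
    refine Finset.card_le_card_of_injOn (fun q => (q.1, q.2.1)) ?_ ?_
    · intro q hq
      simp only [Finset.coe_filter, Finset.mem_product, Set.mem_ofPred_eq] at hq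
      simp only [Finset.coe_product, Set.mem_prod, Finset.mem_coe]
      tauto
    · rintro ⟨⟨x, y⟩, z, w⟩ hq ⟨⟨x', y'⟩, z', w'⟩ hq' he
      simp only [Finset.coe_filter, Set.mem_ofPred_eq] at hq hq'
      simp only [Prod.mk.injEq] at he ⊢
      omega
  calc addEnergy A ≤ ((A ×ˢ A) ×ˢ A).card := this
    _ = A.card ^ 3 := by simp only [Finset.card_product]; ring

lemma addEnergy_trunc_blockSeq_le {N j : ℕ} (hN : N < 2 ^ (j + 1)) :
    addEnergy (trunc (blockSeq m) N) ≤ 2 * N ^ 2 + ∑ i ∈ Finset.range (j + 1), (2 * m i) ^ 3 := by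
  set A := trunc (blockSeq m) N with hA
  have hsub : (((A ×ˢ A) ×ˢ (A ×ˢ A)).filter fun q => q.1.1 + q.1.2 = q.2.1 + q.2.2) ⊆
      ((A ×ˢ A).image (fun p => (p, p)) ∪ (A ×ˢ A).image (fun p => (p, p.swap))) ∪
      (Finset.range (j + 1)).biUnion (fun i =>
        ((blockProg m i ×ˢ blockProg m i) ×ˢ (blockProg m i ×ˢ blockProg m i)).filter
          fun q => q.1.1 + q.1.2 = q.2.1 + q.2.2) := by
    rintro ⟨⟨a, b⟩, c, d⟩ hq
    simp only [Finset.mem_filter, Finset.mem_product, hA, trunc, Finset.mem_image,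
      Finset.mem_Icc] at hq
    obtain ⟨⟨⟨⟨x, hx, rfl⟩, y, hy, rfl⟩, ⟨z, hz, rfl⟩, w, hw, rfl⟩, he⟩ := hq
    have memA : ∀ u, 1 ≤ u ∧ u ≤ N → blockSeq m u ∈ A := fun u hu =>
      Finset.mem_image_of_mem _ (Finset.mem_Icc.2 hu)
    by_cases triv : (x = z ∧ y = w) ∨ (x = w ∧ y = z)
    · apply Finset.mem_union_left
      rcases triv with ⟨rfl, rfl⟩ | ⟨rfl, rfl⟩
      · apply Finset.mem_union_left
        exact Finset.mem_image.2 ⟨_, Finset.mem_product.2 ⟨memA x hx, memA y hy⟩, rfl⟩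
      · apply Finset.mem_union_right
        exact Finset.mem_image.2 ⟨_, Finset.mem_product.2 ⟨memA x hx, memA y hy⟩, rfl⟩
    · have hs : groupStart m y = groupStart m x ∧
          groupStart m z = groupStart m x ∧ groupStart m w = groupStart m x := by
        have := blockSeq_add_eq_add hx.1 hy.1 hz.1 hw.1 he
        tauto
      obtain ⟨hsy, hsz, hsw⟩ := hs
      obtain ⟨v, hv, hvs, hxv⟩ : ∃ v, 1 ≤ v ∧ groupStart m v = groupStart m x ∧ x ≠ v := by
        by_contra! hcon
        have e1 := hcon y hy.1 hsy
        have e2 := hcon z hz.1 hsz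
        have e3 := hcon w hw.1 hsw
        omega
      have hblock : ∀ u, 1 ≤ u → groupStart m u = groupStart m x →
          blockSeq m u ∈ blockProg m (Nat.log 2 x) := by
        intro u hu hux
        have hxm := mem_block_of_groupStart_eq hx.1 hv hxv hvs
        by_cases hxu : u = x
        · rw [hxu]; exact Finset.mem_image_of_mem _ hxm.2
        · have hum := mem_block_of_groupStart_eq hu hx.1 hxu hux.symm
          have hlog : Nat.log 2 u = Nat.log 2 x := by
            have := hum.1.symm.trans (hux.trans hxm.1)
            exact Nat.pow_right_injective le_rfl this
          rw [hlog] at hum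
          exact Finset.mem_image_of_mem _ hum.2
      apply Finset.mem_union_right
      refine Finset.mem_biUnion.2 ⟨Nat.log 2 x, ?_, ?_⟩
      · rw [Finset.mem_range]
        exact Nat.log_lt_of_lt_pow (by omega) (by omega)
      · simp only [Finset.mem_filter, Finset.mem_product]
        exact ⟨⟨⟨hblock x hx.1 rfl, hblock y hy.1 hsy⟩, hblock z hz.1 hsz, hblock w hw.1 hsw⟩, he⟩
  have hAA : (A ×ˢ A).card ≤ N ^ 2 := by
    rw [Finset.card_product, sq]
    exact Nat.mul_le_mul (card_trunc_le _ N) (card_trunc_le _ N)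
  have hP : ∀ i, (blockProg m i).card ≤ 2 * m i := fun i =>
    Finset.card_image_le.trans (by simp)
  refine (Finset.card_le_card hsub).trans ((Finset.card_union_le _ _).trans (add_le_add ?_ ?_))
  · refine (Finset.card_union_le _ _).trans ?_
    have h1 := (Finset.card_image_le (s := A ×ˢ A) (f := fun p => (p, p))).trans hAA
    have h2 := (Finset.card_image_le (s := A ×ˢ A) (f := fun p => (p, p.swap))).trans hAA
    omega
  · refine Finset.card_biUnion_le.trans (Finset.sum_le_sum fun i _ => ?_)
    exact (addEnergy_le_card_cube _).trans (Nat.pow_le_pow_left (hP i) 3)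

lemma blockSeq_of_mem {j i : ℕ} (hm : 2 * m j ≤ 2 ^ j) (hi : i < 2 * m j) :
    blockSeq m (2 ^ j + i) = groupScale (2 ^ j) * (3 * 2 ^ j + i) := by
  unfold blockSeq
  rw [groupStart_eq_of_mem hm (Finset.mem_Ico.2 ⟨by omega, by omega⟩)]
  congr 1; ring

lemma cube_le_addEnergy_blockProg {j : ℕ} (hm : 2 * m j ≤ 2 ^ j) :
    m j ^ 3 ≤ addEnergy (blockProg m j) := by
  set R := Finset.range (m j) with hR
  have hcard : ((R ×ˢ R) ×ˢ R).card = m j ^ 3 := by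
    simp only [Finset.card_product, hR, Finset.card_range]; ring
  rw [← hcard]
  unfold addEnergy
  have hpos : 1 ≤ 2 ^ j := Nat.one_le_two_pow
  refine Finset.card_le_card_of_injOn (fun p =>
    ((blockSeq m (2 ^ j + (p.1.1 + p.1.2)), blockSeq m (2 ^ j + p.2)),
      (blockSeq m (2 ^ j + p.1.1), blockSeq m (2 ^ j + (p.1.2 + p.2))))) ?_ ?_
  · rintro ⟨⟨x, y⟩, z⟩ hp
    simp only [Finset.coe_product, Set.mem_prod, Finset.mem_coe, hR, Finset.mem_range] at hp
    have mem : ∀ i, i < 2 * m j → blockSeq m (2 ^ j + i) ∈ blockProg m j := fun i hi =>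
      Finset.mem_image_of_mem _ (Finset.mem_Ico.2 ⟨by omega, by omega⟩)
    simp only [Finset.coe_filter, Set.mem_ofPred_eq, Finset.mem_product]
    refine ⟨⟨⟨mem _ (by omega), mem _ (by omega)⟩, mem _ (by omega), mem _ (by omega)⟩, ?_⟩
    rw [blockSeq_of_mem hm (by omega), blockSeq_of_mem hm (by omega),
      blockSeq_of_mem hm (by omega), blockSeq_of_mem hm (by omega)]
    ring
  · rintro ⟨⟨x, y⟩, z⟩ - ⟨⟨x', y'⟩, z'⟩ - he
    simp only [Prod.mk.injEq] at he ⊢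
    obtain ⟨⟨h1, h2⟩, h3, -⟩ := he
    have mem : ∀ i, 2 ^ j + i ∈ Set.Ici 1 := fun i => by
      rw [Set.mem_Ici]; omega
    have h1 := blockSeq_injOn (mem _) (mem _) h1
    have h2 := blockSeq_injOn (mem _) (mem _) h2
    have h3 := blockSeq_injOn (mem _) (mem _) h3
    omega

lemma cube_le_addEnergy_trunc_blockSeq {N j : ℕ} (hm : 2 * m j ≤ 2 ^ j) (hN : 2 ^ (j + 1) ≤ N) :
    m j ^ 3 ≤ addEnergy (trunc (blockSeq m) N) := by
  refine (cube_le_addEnergy_blockProg hm).trans (addEnergy_mono ?_)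
  have hpos : 1 ≤ 2 ^ j := Nat.one_le_two_pow
  rw [pow_succ] at hN
  refine Finset.image_subset_image fun n hn => ?_
  rw [Finset.mem_Ico] at hn
  rw [Finset.mem_Icc]
  omega

end Combinatorics

section PairCorrelation

lemma dni_le_abs_sub (x : ℝ) (z : ℤ) : dni x ≤ |x - z| := round_le x z

lemma three_le_pcf_blockSeq {m : ℕ → ℕ} {j K h : ℕ} {α : ℝ} {c : ℤ} (hm : 2 * m j ≤ 2 ^ j)
    (hh : 1 ≤ h) (hKh : K * h ≤ m j) (hKm : 3 * 2 ^ (j + 1) ≤ K * m j)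
    (hc : |α * groupScale (2 ^ j) * h - c| ≤ 1 / (2 ^ (j + 1) * K)) :
    3 ≤ pcf (blockSeq m) 1 α (2 ^ (j + 1)) := by
  have hpos : 1 ≤ 2 ^ j := Nat.one_le_two_pow
  have hK : 0 < K := by
    rcases Nat.eq_zero_or_pos K with rfl | h
    · simp at hKm
    · exact h
  have hK' : (0 : ℝ) < K := by exact_mod_cast hK
  set S := (Finset.Icc 1 (2 ^ (j + 1)) ×ˢ Finset.Icc 1 (2 ^ (j + 1))).filter fun p : ℕ × ℕ =>
      p.1 ≠ p.2 ∧ dni (α * (blockSeq m p.1 : ℝ) - α * (blockSeq m p.2 : ℝ)) ≤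
        1 / ((2 ^ (j + 1) : ℕ) : ℝ) with hS
  have hcard : (Finset.Icc 1 K ×ˢ Finset.range (m j)).card ≤ S.card := by
    refine Finset.card_le_card_of_injOn
      (fun p => (2 ^ j + (p.2 + p.1 * h), 2 ^ j + p.2)) ?_ ?_
    · rintro ⟨k, i⟩ hp
      simp only [Finset.coe_product, Set.mem_prod, Finset.mem_coe, Finset.mem_Icc,
        Finset.mem_range] at hp
      obtain ⟨⟨hk1, hkK⟩, hi⟩ := hp
      have hkh : k * h ≤ K * h := Nat.mul_le_mul_right _ hkK
      have hkh1 : 1 ≤ k * h := Nat.mul_pos hk1 hh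
      simp only [hS, Finset.coe_filter, Set.mem_ofPred_eq, Finset.mem_product, Finset.mem_Icc]
      refine ⟨⟨⟨by omega, by rw [pow_succ]; omega⟩, by omega, by rw [pow_succ]; omega⟩,
        by omega, ?_⟩
      rw [blockSeq_of_mem hm (by omega), blockSeq_of_mem hm (by omega)]
      refine (dni_le_abs_sub _ (k * c)).trans ?_
      have e : α * ((groupScale (2 ^ j) * (3 * 2 ^ j + (i + k * h)) : ℕ) : ℝ) -
          α * ((groupScale (2 ^ j) * (3 * 2 ^ j + i) : ℕ) : ℝ) - ((k * c : ℤ) : ℝ) =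
          k * (α * groupScale (2 ^ j) * h - c) := by
        push_cast; ring
      rw [e, abs_mul, Nat.abs_cast]
      calc (k : ℝ) * |α * groupScale (2 ^ j) * h - c|
          ≤ K * (1 / (2 ^ (j + 1) * K)) := by gcongr
        _ = 1 / ((2 ^ (j + 1) : ℕ) : ℝ) := by push_cast; field_simp
    · rintro ⟨k, i⟩ - ⟨k', i'⟩ - he
      simp only [Prod.mk.injEq] at he ⊢
      have hi : i = i' := by omega
      have hk : k * h = k' * h := by omega
      exact ⟨Nat.eq_of_mul_eq_mul_right hh hk, hi⟩
  have hcard' : 3 * 2 ^ (j + 1) ≤ S.card := by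
    refine hKm.trans (le_trans (le_of_eq ?_) hcard)
    simp [Finset.card_product]
  unfold pcf
  rw [le_div_iff₀ (by positivity)]
  exact_mod_cast hcard'

end PairCorrelation

section Approximation

/-- The rational numbers in `[0, 1)` with denominator at most `H`. -/
def fareyFinset (H : ℕ) : Finset ℚ :=
  ((Finset.range H ×ˢ Finset.range (H + 1)).image fun p => (p.1 : ℚ) / p.2).filter
    fun q => 0 ≤ q ∧ q < 1 ∧ q.den ≤ H

lemma mem_fareyFinset {H : ℕ} {q : ℚ} :
    q ∈ fareyFinset H ↔ 0 ≤ q ∧ q < 1 ∧ q.den ≤ H := by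
  refine ⟨fun h => (Finset.mem_filter.1 h).2, fun h => Finset.mem_filter.2 ⟨?_, h⟩⟩
  obtain ⟨h0, h1, hd⟩ := h
  have hnum : 0 ≤ q.num := Rat.num_nonneg.2 h0
  have hlt : q.num < q.den := Rat.num_lt_denom_iff.2 h1
  refine Finset.mem_image.2 ⟨(q.num.toNat, q.den), ?_, ?_⟩
  · simp only [Finset.mem_product, Finset.mem_range]
    omega
  · have : ((q.num.toNat : ℕ) : ℚ) = (q.num : ℚ) := by
      rw [← Int.cast_natCast, Int.toNat_of_nonneg hnum]
    simp only [this]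
    exact Rat.num_div_den q

lemma Rat.one_div_den_mul_den_le_sub {p q : ℚ} (h : p < q) :
    1 / ((p.den : ℝ) * q.den) ≤ (q : ℝ) - p := by
  have hp : (0 : ℚ) < p.den := by exact_mod_cast p.den_pos
  have hq : (0 : ℚ) < q.den := by exact_mod_cast q.den_pos
  have key : 1 / ((p.den : ℚ) * q.den) ≤ q - p := by
    rw [div_le_iff₀ (by positivity)]
    have e : (q - p) * (p.den * q.den) = ((q.num * p.den - p.num * q.den : ℤ) : ℚ) := by
      push_cast
      rw [← Rat.mul_den_eq_num q, ← Rat.mul_den_eq_num p]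
      ring
    have hpos : 0 < (q - p) * (p.den * q.den) := mul_pos (sub_pos.2 h) (by positivity)
    rw [e] at hpos ⊢
    have : 0 < q.num * p.den - p.num * q.den := by exact_mod_cast hpos
    exact_mod_cast this
  have := (Rat.cast_le (K := ℝ)).2 key
  push_cast at this
  exact this

lemma Rat.add_one_div_den_le_one {q : ℚ} (h : q < 1) : (q : ℝ) + 1 / q.den ≤ 1 := by
  have := Rat.one_div_den_mul_den_le_sub h
  simp only [Rat.den_one, Nat.cast_one, mul_one, Rat.cast_one] at this
  linarith

lemma le_sum_fareyFinset_inv_den {H : ℕ} (hH : 2 ≤ H) :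
    ((H : ℝ) + 1) / 4 ≤ ∑ q ∈ fareyFinset H, 1 / (q.den : ℝ) := by
  have hcover : Set.Icc (0 : ℝ) (1 / 2) ⊆ ⋃ q ∈ fareyFinset H,
      Set.Icc ((q : ℝ) - 1 / ((H + 1) * q.den)) (q + 1 / ((H + 1) * q.den)) := by
    intro x hx
    obtain ⟨q, hq, hd⟩ := Real.exists_rat_abs_sub_le_and_den_le x (n := H) (by omega)
    rw [abs_le] at hq
    have hd0 : (0 : ℝ) < q.den := by exact_mod_cast q.den_pos
    have hd1 : (1 : ℝ) ≤ q.den := by exact_mod_cast q.den_pos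
    have hH' : (2 : ℝ) ≤ H := by exact_mod_cast hH
    have hlt : 1 / (((H : ℝ) + 1) * q.den) < 1 / q.den := by
      apply one_div_lt_one_div_of_lt hd0
      nlinarith
    have hle : 1 / (((H : ℝ) + 1) * q.den) ≤ 1 / 3 := by
      apply one_div_le_one_div_of_le (by norm_num)
      nlinarith
    have h0 : 0 ≤ q := by
      have h1 : -(1 / (q.den : ℝ)) < q := by linarith [hx.1]
      have h2 : (-1 : ℝ) < q * q.den := by
        have := mul_lt_mul_of_pos_right h1 hd0
        rwa [neg_mul, one_div_mul_cancel hd0.ne'] at this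
      have h3 : (-1 : ℚ) < q * q.den := by exact_mod_cast h2
      rw [Rat.mul_den_eq_num] at h3
      have h4 : (-1 : ℤ) < q.num := by exact_mod_cast h3
      exact Rat.num_nonneg.1 (by omega)
    have h1 : q < 1 := by
      have : (q : ℝ) < 1 := by linarith [hx.2]
      exact_mod_cast this
    refine Set.mem_biUnion (mem_fareyFinset.2 ⟨h0, h1, hd⟩) ?_
    constructor <;> linarith
  have hvol := (measure_mono (μ := volume) hcover).trans
    (measure_biUnion_finset_le (fareyFinset H) _)
  simp only [Real.volume_Icc] at hvol
  rw [← ENNReal.ofReal_sum_of_nonneg] at hvol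
  · have hnn : 0 ≤ ∑ q ∈ fareyFinset H, (((q : ℝ) + 1 / ((H + 1) * q.den)) -
        (q - 1 / ((H + 1) * q.den))) := Finset.sum_nonneg fun q _ => by
      have : 0 ≤ 1 / (((H : ℝ) + 1) * q.den) := by positivity
      linarith
    rw [ENNReal.ofReal_le_ofReal_iff hnn] at hvol
    have e : ∑ q ∈ fareyFinset H, (((q : ℝ) + 1 / ((H + 1) * q.den)) -
        (q - 1 / ((H + 1) * q.den))) = 2 / (H + 1) * ∑ q ∈ fareyFinset H, 1 / (q.den : ℝ) := by
      rw [Finset.mul_sum]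
      refine Finset.sum_congr rfl fun q _ => ?_
      rw [div_mul_div_comm]; ring
    rw [e, div_mul_eq_mul_div, le_div_iff₀ (by positivity)] at hvol
    linarith
  · intro q _
    have : 0 ≤ 1 / (((H : ℝ) + 1) * q.den) := by positivity
    linarith

lemma mem_Ico_floor_div {x : ℝ} {Q : ℕ} (hx : 0 ≤ x) (hQ : 0 < Q) :
    x ∈ Set.Ico ((⌊x * Q⌋₊ : ℝ) / Q) ((⌊x * Q⌋₊ + 1 : ℝ) / Q) := by
  have hQ' : (0 : ℝ) < Q := by exact_mod_cast hQ
  exact ⟨(div_le_iff₀ hQ').2 (Nat.floor_le (by positivity)),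
    (lt_div_iff₀ hQ').2 (Nat.lt_floor_add_one _)⟩

lemma exists_finset_cells {H Q : ℕ} {t : ℝ} (hH : 2 ≤ H) (hQ : 0 < Q) (ht : 0 < t)
    (htH : t ≤ 1 / H) (hHQ : H ≤ t * Q) :
    ∃ B ⊆ Finset.range Q, t * (H + 1) / 4 * Q ≤ B.card ∧
      ∀ b ∈ B, ∀ y ∈ Set.Ico ((b : ℝ) / Q) ((b + 1) / Q),
        ∃ h : ℕ, 1 ≤ h ∧ h ≤ H ∧ ∃ c : ℤ, |y * h - c| ≤ 2 * t := by
  have hQ' : (0 : ℝ) < Q := by exact_mod_cast hQ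
  have hH' : (0 : ℝ) < H := by exact_mod_cast (by omega : 0 < H)
  set J : ℚ → Set ℝ := fun q => Set.Ico (q : ℝ) (q + t / q.den) with hJ
  set B := (Finset.range Q).filter fun b : ℕ => ∃ q ∈ fareyFinset H,
    ∃ x ∈ J q, x ∈ Set.Ico ((b : ℝ) / Q) ((b + 1) / Q) with hB
  refine ⟨B, Finset.filter_subset _ _, ?_, ?_⟩
  · have hJle : ∀ q ∈ fareyFinset H, t / (q.den : ℝ) ≤ 1 / (q.den * H) := by
      intro q _
      rw [mul_comm, ← one_div_mul_one_div, div_eq_mul_one_div]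
      gcongr
    have hdisj : Set.PairwiseDisjoint (fareyFinset H : Set ℚ) J := by
      have aux : ∀ p ∈ fareyFinset H, ∀ q ∈ fareyFinset H, p < q → Disjoint (J p) (J q) := by
        intro p hp q hq hpq
        have h1 := Rat.one_div_den_mul_den_le_sub hpq
        have h2 := hJle p hp
        have h3 : (q.den : ℝ) ≤ H := by exact_mod_cast (mem_fareyFinset.1 hq).2.2
        have hq0 : (0 : ℝ) < q.den := by exact_mod_cast q.den_pos
        have hp0 : (0 : ℝ) < p.den := by exact_mod_cast p.den_pos
        have h4 : 1 / ((p.den : ℝ) * H) ≤ 1 / (p.den * q.den) := by gcongr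
        rw [Set.disjoint_left]
        intro x hx hx'
        linarith [hx.2, hx'.1]
      intro p hp q hq hpq
      rcases lt_or_gt_of_ne hpq with h | h
      · exact aux p hp q hq h
      · exact (aux q hq p hp h).symm
    have hsub : (⋃ q ∈ fareyFinset H, J q) ⊆
        ⋃ b ∈ B, Set.Ico ((b : ℝ) / Q) ((b + 1) / Q) := by
      intro x hx
      obtain ⟨q, hq, hxq⟩ := Set.mem_iUnion₂.1 hx
      obtain ⟨h0, h1, -⟩ := mem_fareyFinset.1 hq
      have h0' : (0 : ℝ) ≤ q := by exact_mod_cast h0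
      have hx0 : 0 ≤ x := h0'.trans hxq.1
      have hx1 : x < 1 := by
        have hq0 : (0 : ℝ) < q.den := by exact_mod_cast q.den_pos
        have : t / (q.den : ℝ) ≤ 1 / q.den := by
          have : t ≤ 1 := htH.trans (by rw [div_le_one hH']; exact_mod_cast (by omega : 1 ≤ H))
          gcongr
        linarith [hxq.2, Rat.add_one_div_den_le_one h1]
      have hcell := mem_Ico_floor_div hx0 hQ
      refine Set.mem_biUnion (x := ⌊x * Q⌋₊) (Finset.mem_filter.2 ⟨?_, q, hq, x, hxq, hcell⟩) hcell
      rw [Finset.mem_range, Nat.floor_lt (by positivity)]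
      nlinarith
    have hvol := (measure_mono (μ := volume) hsub).trans (measure_biUnion_finset_le B _)
    rw [measure_biUnion_finset hdisj (fun q _ => measurableSet_Ico)] at hvol
    simp only [hJ, Real.volume_Ico, add_sub_cancel_left] at hvol
    rw [← ENNReal.ofReal_sum_of_nonneg (fun q _ => by positivity)] at hvol
    have e : ∀ b : ℕ, ((b : ℝ) + 1) / Q - b / Q = 1 / Q := fun b => by ring
    simp only [e, Finset.sum_const, nsmul_eq_mul] at hvol
    rw [← ENNReal.ofReal_natCast, ← ENNReal.ofReal_mul (by positivity),
      ENNReal.ofReal_le_ofReal_iff (by positivity), mul_one_div, le_div_iff₀ hQ'] at hvol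
    refine le_trans ?_ hvol
    have hsum := le_sum_fareyFinset_inv_den hH
    have e' : ∑ q ∈ fareyFinset H, t / (q.den : ℝ) =
        t * ∑ q ∈ fareyFinset H, 1 / (q.den : ℝ) := by
      rw [Finset.mul_sum]; exact Finset.sum_congr rfl fun q _ => by ring
    rw [e']
    have : t * (((H : ℝ) + 1) / 4) ≤ t * ∑ q ∈ fareyFinset H, 1 / (q.den : ℝ) := by gcongr
    nlinarith
  · intro b hb y hy
    obtain ⟨-, q, hq, x, hxq, hx⟩ := Finset.mem_filter.1 hb
    obtain ⟨h0, h1, hd⟩ := mem_fareyFinset.1 hq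
    have hq0 : (0 : ℝ) < q.den := by exact_mod_cast q.den_pos
    have hd' : (q.den : ℝ) ≤ H := by exact_mod_cast hd
    refine ⟨q.den, q.den_pos, hd, q.num, ?_⟩
    have hnum : (q.num : ℝ) = q * q.den := by exact_mod_cast (Rat.mul_den_eq_num q).symm
    have hyx : |y - x| ≤ 1 / Q := by
      have e : ((b : ℝ) + 1) / Q = b / Q + 1 / Q := by ring
      rw [abs_le]
      constructor <;> linarith [hy.1, hy.2, hx.1, hx.2]
    have hxq' : |x - q| ≤ t / q.den := by
      rw [abs_le]
      constructor
      · have : 0 ≤ t / q.den := by positivity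
        linarith [hxq.1]
      · linarith [hxq.2]
    have hyq : |y - q| ≤ 1 / Q + t / q.den :=
      (abs_sub_le y x q).trans (add_le_add hyx hxq')
    rw [hnum, ← sub_mul, abs_mul, abs_of_pos hq0]
    calc |y - q| * q.den ≤ (1 / Q + t / q.den) * q.den := by gcongr
      _ = q.den / Q + t := by field_simp
      _ ≤ t + t := by
        gcongr
        rw [div_le_iff₀ hQ']
        exact hd'.trans hHQ
      _ = 2 * t := by ring

end Approximation

section BorelCantelli

variable {δ Q : ℕ → ℕ} {B : ℕ → Finset ℕ}

lemma exists_finset_floor_mem (hδ : ∀ n, δ (n + 1) = δ n * Q n) (hQ : ∀ n, 0 < Q n)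
    (hB : ∀ n, B n ⊆ Finset.range (Q n)) {m n : ℕ} (hmn : m ≤ n) :
    ∃ Z : Finset ℕ, (Z.card : ℝ) ≤ δ n * ∏ j ∈ Finset.Ico m n, (1 - (B j).card / (Q j : ℝ)) ∧
      ∀ α ∈ Set.Ico (0 : ℝ) 1, (∀ j, m ≤ j → ⌊α * δ (j + 1)⌋₊ % Q j ∉ B j) →
        0 < δ n → ⌊α * δ n⌋₊ ∈ Z := by
  induction n, hmn using Nat.le_induction with
  | base =>
    refine ⟨Finset.range (δ m), by simp, fun α hα _ hpos => ?_⟩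
    have hpos' : (0 : ℝ) < δ m := by exact_mod_cast hpos
    rw [Finset.mem_range, Nat.floor_lt (mul_nonneg hα.1 hpos'.le)]
    nlinarith [hα.2]
  | succ n hmn ih =>
    obtain ⟨Z, hcard, hZ⟩ := ih
    have hQ' : (0 : ℝ) < Q n := by exact_mod_cast hQ n
    refine ⟨(Z ×ˢ (Finset.range (Q n) \ B n)).image fun p => Q n * p.1 + p.2, ?_, ?_⟩
    · have h1 : (((Z ×ˢ (Finset.range (Q n) \ B n)).image fun p => Q n * p.1 + p.2).card : ℝ) ≤
          Z.card * (Q n - (B n).card) := by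
        have h2 : (((Finset.range (Q n) \ B n).card : ℕ) : ℝ) = Q n - (B n).card := by
          rw [Finset.card_sdiff_of_subset (hB n), Finset.card_range, Nat.cast_sub]
          simpa using Finset.card_le_card (hB n)
        rw [← h2]
        exact_mod_cast Finset.card_image_le.trans (Finset.card_product _ _).le
      refine h1.trans ?_
      have h3 : (0 : ℝ) ≤ Q n - (B n).card := by
        have := Finset.card_le_card (hB n)
        rw [Finset.card_range] at this
        have : ((B n).card : ℝ) ≤ Q n := by exact_mod_cast this
        linarith
      rw [Finset.prod_Ico_succ_top hmn, hδ n]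
      calc (Z.card : ℝ) * (Q n - (B n).card)
          ≤ (δ n * ∏ j ∈ Finset.Ico m n, (1 - (B j).card / (Q j : ℝ))) * (Q n - (B n).card) := by
            gcongr
        _ = _ := by push_cast; field_simp
    · intro α hα hdig hpos
      have hpos' : 0 < δ n := by
        rw [hδ n] at hpos; exact Nat.pos_of_mul_pos_right hpos
      have hfloor : ⌊α * δ n⌋₊ = ⌊α * δ (n + 1)⌋₊ / Q n := by
        rw [← Nat.floor_div_natCast, hδ n]
        congr 1
        push_cast
        field_simp
      refine Finset.mem_image.2 ⟨(⌊α * δ (n + 1)⌋₊ / Q n, ⌊α * δ (n + 1)⌋₊ % Q n), ?_,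
        Nat.div_add_mod _ _⟩
      rw [Finset.mem_product, Finset.mem_sdiff, Finset.mem_range]
      exact ⟨hfloor ▸ hZ α hα hdig hpos', Nat.mod_lt _ (hQ n), hdig n hmn⟩

lemma volume_digits_avoid_eq_zero (hδ : ∀ n, δ (n + 1) = δ n * Q n) (hδ0 : ∀ n, 0 < δ n)
    (hQ : ∀ n, 0 < Q n) (hB : ∀ n, B n ⊆ Finset.range (Q n))
    (hsum : ¬ Summable fun n => ((B n).card : ℝ) / Q n) :
    volume {α : ℝ | α ∈ Set.Ico (0 : ℝ) 1 ∧
      ∃ m, ∀ j, m ≤ j → ⌊α * δ (j + 1)⌋₊ % Q j ∉ B j} = 0 := by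
  set S : ℕ → Set ℝ := fun m => {α : ℝ | α ∈ Set.Ico (0 : ℝ) 1 ∧
    ∀ j, m ≤ j → ⌊α * δ (j + 1)⌋₊ % Q j ∉ B j} with hS
  set p : ℕ → ℝ := fun n => ((B n).card : ℝ) / Q n with hp
  have hp0 : ∀ n, 0 ≤ p n := fun n => by positivity
  have hp1 : ∀ n, 0 ≤ 1 - p n := fun n => by
    have hQ' : (0 : ℝ) < Q n := by exact_mod_cast hQ n
    have := Finset.card_le_card (hB n)
    rw [Finset.card_range] at this
    rw [sub_nonneg, hp, div_le_one hQ']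
    exact_mod_cast this
  have hbound : ∀ m n, m ≤ n →
      volume (S m) ≤ ENNReal.ofReal (∏ j ∈ Finset.Ico m n, (1 - p j)) := by
    intro m n hmn
    obtain ⟨Z, hcard, hZ⟩ := exists_finset_floor_mem hδ hQ hB hmn
    have hδ' : (0 : ℝ) < δ n := by exact_mod_cast hδ0 n
    have hsub : S m ⊆ ⋃ z ∈ Z, Set.Ico ((z : ℝ) / δ n) ((z + 1) / δ n) := fun α hα =>
      Set.mem_biUnion (hZ α hα.1 hα.2 (hδ0 n)) (mem_Ico_floor_div hα.1.1 (hδ0 n))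
    refine ((measure_mono hsub).trans (measure_biUnion_finset_le Z _)).trans ?_
    have e : ∀ z : ℕ, ((z : ℝ) + 1) / δ n - z / δ n = 1 / δ n := fun z => by ring
    simp only [Real.volume_Ico, e, Finset.sum_const, nsmul_eq_mul]
    rw [← ENNReal.ofReal_natCast, ← ENNReal.ofReal_mul (by positivity)]
    apply ENNReal.ofReal_le_ofReal
    rw [mul_one_div, div_le_iff₀ hδ', mul_comm]
    exact hcard
  have hzero : ∀ m, volume (S m) = 0 := by
    intro m
    have hsumTop : Tendsto (fun n => ∑ j ∈ Finset.range n, p j) atTop atTop :=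
      (not_summable_iff_tendsto_nat_atTop_of_nonneg hp0).1 hsum
    have hexp : Tendsto (fun n => Real.exp (∑ j ∈ Finset.range m, p j -
        ∑ j ∈ Finset.range n, p j)) atTop (nhds 0) :=
      Real.tendsto_exp_atBot.comp
        (tendsto_const_nhds.add_atBot (tendsto_neg_atTop_atBot.comp hsumTop))
    have hexp' := ENNReal.tendsto_ofReal hexp
    rw [ENNReal.ofReal_zero] at hexp'
    refine le_antisymm (ge_of_tendsto hexp' ?_) zero_le
    filter_upwards [eventually_ge_atTop m] with n hn
    refine (hbound m n hn).trans (ENNReal.ofReal_le_ofReal ?_)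
    calc ∏ j ∈ Finset.Ico m n, (1 - p j) ≤ ∏ j ∈ Finset.Ico m n, Real.exp (-p j) :=
          Finset.prod_le_prod (fun j _ => hp1 j) fun j _ => Real.one_sub_le_exp_neg (p j)
      _ = Real.exp (∑ j ∈ Finset.range m, p j - ∑ j ∈ Finset.range n, p j) := by
          rw [← Real.exp_sum, Finset.sum_neg_distrib, Finset.sum_Ico_eq_sub _ hn]
          congr 1; ring
  have hunion : {α : ℝ | α ∈ Set.Ico (0 : ℝ) 1 ∧
      ∃ m, ∀ j, m ≤ j → ⌊α * δ (j + 1)⌋₊ % Q j ∉ B j} ⊆ ⋃ m, S m := by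
    rintro α ⟨hα, m, hm⟩
    exact Set.mem_iUnion.2 ⟨m, hα, hm⟩
  exact measure_mono_null hunion (measure_iUnion_null hzero)

end BorelCantelli

section Blocks

/-- The ratio of consecutive block scales. -/
def blockRatio (j : ℕ) : ℕ := 2 ^ (3 * 4 ^ j)

lemma blockRatio_pos (j : ℕ) : 0 < blockRatio j := by
  unfold blockRatio; positivity

lemma groupScale_two_pow_succ (j : ℕ) :
    groupScale (2 ^ (j + 1)) = groupScale (2 ^ j) * blockRatio j := by
  unfold groupScale blockRatio
  rw [← pow_add]
  congr 1
  have : (4 : ℕ) ^ j = (2 ^ j) ^ 2 := by rw [← pow_mul, mul_comm, pow_mul]; norm_num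
  rw [this, pow_succ]; ring

lemma four_mul_two_pow_sq_le_blockRatio (j : ℕ) : 4 * (2 ^ j) ^ 2 ≤ blockRatio j := by
  have h : (2 : ℕ) ^ 2 * (2 ^ j) ^ 2 = 2 ^ (2 + j * 2) := by rw [← pow_mul, ← pow_add]
  have hj : j < 4 ^ j := Nat.lt_pow_self (by norm_num)
  calc 4 * (2 ^ j) ^ 2 = 2 ^ (2 + j * 2) := by rw [← h]; norm_num
    _ ≤ 2 ^ (3 * 4 ^ j) := Nat.pow_le_pow_right (by norm_num) (by omega)

lemma two_pow_le_four_mul_mul {j K m : ℕ} (hK : 1 ≤ K) (hKj : 192 * K ^ 3 ≤ 2 ^ j)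
    (hm : m = 2 ^ j / (2 * K)) : 2 ^ j ≤ 4 * K * m := by
  have h1 := Nat.div_add_mod (2 ^ j) (2 * K)
  have h2 := Nat.mod_lt (2 ^ j) (show 2 * K > 0 by omega)
  rw [← hm] at h1
  have h3 : K ≤ K ^ 3 := Nat.le_self_pow (by norm_num) K
  have h4 : 4 * K * m = 2 * (2 * K * m) := by ring
  omega

lemma exists_block_cells {m : ℕ → ℕ} {j K : ℕ} (hK : 1 ≤ K) (hKj : 192 * K ^ 3 ≤ 2 ^ j)
    (hm : m j = 2 ^ j / (2 * K)) :
    ∃ B ⊆ Finset.range (blockRatio j),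
      1 / (36864 * (K : ℝ) ^ 3) ≤ (B.card : ℝ) / blockRatio j ∧
      ∀ α : ℝ, 0 ≤ α → ⌊α * groupScale (2 ^ (j + 1))⌋₊ % blockRatio j ∈ B →
        3 ≤ pcf (blockSeq m) 1 α (2 ^ (j + 1)) := by
  have hlow := two_pow_le_four_mul_mul hK hKj hm
  have hup : 2 * K * m j ≤ 2 ^ j := by rw [hm]; exact Nat.mul_div_le _ _
  have hmj : 2 * m j ≤ 2 ^ j := by nlinarith
  have hK' : (0 : ℝ) < K := by exact_mod_cast hK
  have hQ := blockRatio_pos j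
  have hQ' : (0 : ℝ) < blockRatio j := by exact_mod_cast hQ
  set H := m j / (24 * K) with hH
  have hHm : 24 * K * H ≤ m j := Nat.mul_div_le _ _
  have hmH : m j < 24 * K * (H + 1) := Nat.lt_mul_div_succ _ (by omega)
  have hH2 : 2 ≤ H := by
    rw [hH, Nat.le_div_iff_mul_le (by omega)]
    have : 4 * K * (2 * (24 * K)) ≤ 4 * K * m j := by nlinarith
    exact Nat.le_of_mul_le_mul_left this (by omega)
  have hH0 : (0 : ℝ) < H := by exact_mod_cast (by omega : 0 < H)
  set t : ℝ := 1 / (2 * (2 ^ (j + 1) * ((24 * K : ℕ) : ℝ))) with ht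
  have ht0 : 0 < t := by rw [ht]; push_cast; positivity
  have htH : t ≤ 1 / H := by
    rw [ht]
    apply one_div_le_one_div_of_le hH0
    have : H ≤ 2 * (2 ^ (j + 1) * (24 * K)) := by
      have h1 : 2 ^ j ≤ 2 * (2 ^ (j + 1) * (24 * K)) := by rw [pow_succ]; nlinarith
      have h2 : H ≤ 24 * K * H := Nat.le_mul_of_pos_left _ (by omega)
      omega
    exact_mod_cast this
  have hHQ : (H : ℝ) ≤ t * blockRatio j := by
    rw [ht, one_div_mul_eq_div, le_div_iff₀ (by positivity)]
    have : H * (2 * (2 ^ (j + 1) * (24 * K))) ≤ blockRatio j := by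
      refine le_trans ?_ (four_mul_two_pow_sq_le_blockRatio j)
      calc H * (2 * (2 ^ (j + 1) * (24 * K))) = 4 * 2 ^ j * (24 * K * H) := by
            rw [pow_succ]; ring
        _ ≤ 4 * 2 ^ j * 2 ^ j := by gcongr; omega
        _ = 4 * (2 ^ j) ^ 2 := by ring
    exact_mod_cast this
  obtain ⟨B, hB, hcard, hgood⟩ := exists_finset_cells hH2 hQ ht0 htH hHQ
  refine ⟨B, hB, ?_, fun α hα hdig => ?_⟩
  · rw [le_div_iff₀ hQ']
    refine le_trans (mul_le_mul_of_nonneg_right ?_ hQ'.le) hcard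
    have h1 : (2 : ℝ) ^ j ≤ 4 * K * m j := by exact_mod_cast hlow
    have h2 : (m j : ℝ) ≤ 24 * K * (H + 1) := by exact_mod_cast hmH.le
    have h3 : (2 : ℝ) ^ j ≤ 96 * K ^ 2 * (H + 1) :=
      calc (2 : ℝ) ^ j ≤ 4 * K * m j := h1
        _ ≤ 4 * K * (24 * K * (H + 1)) := by gcongr
        _ = _ := by ring
    have e : t * ((H : ℝ) + 1) / 4 = (H + 1) / (384 * K * 2 ^ j) := by
      rw [ht, pow_succ]; push_cast; field_simp; norm_num
    rw [e, div_le_div_iff₀ (by positivity) (by positivity)]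
    calc 1 * (384 * (K : ℝ) * 2 ^ j) ≤ 384 * K * (96 * K ^ 2 * (H + 1)) := by
          rw [one_mul]; gcongr
      _ = (H + 1) * (36864 * K ^ 3) := by ring
  · set x := ⌊α * groupScale (2 ^ (j + 1))⌋₊ with hx
    have hdm : ((blockRatio j * (x / blockRatio j) + x % blockRatio j : ℕ) : ℝ) = x := by
      rw [Nat.div_add_mod]
    push_cast at hdm
    have hx1 : (x : ℝ) ≤ α * groupScale (2 ^ (j + 1)) := Nat.floor_le (by positivity)
    have hx2 : α * groupScale (2 ^ (j + 1)) < x + 1 := Nat.lt_floor_add_one _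
    rw [groupScale_two_pow_succ] at hx1 hx2
    push_cast at hx1 hx2
    set u : ℕ := x / blockRatio j with hu
    set b : ℕ := x % blockRatio j with hb
    obtain ⟨h, hh1, hhH, c, hc⟩ := hgood b hdig (α * groupScale (2 ^ j) - u) (by
      constructor
      · rw [div_le_iff₀ hQ']; nlinarith
      · rw [lt_div_iff₀ hQ']; nlinarith)
    refine three_le_pcf_blockSeq (K := 24 * K) (h := h) (c := c + u * h) hmj hh1 ?_ ?_ ?_
    · exact (Nat.mul_le_mul_left _ hhH).trans hHm
    · rw [pow_succ]; nlinarith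
    · have e : α * groupScale (2 ^ j) * h - ((c + u * h : ℤ) : ℝ) =
          (α * groupScale (2 ^ j) - u) * h - c := by push_cast; ring
      rw [e]
      refine hc.trans (le_of_eq ?_)
      rw [ht]; field_simp

end Blocks

section Construction

lemma ceil_rpow_cube_bounds {x : ℝ} (hx : 1 ≤ x) :
    1 ≤ ⌈x ^ (1 / 3 : ℝ)⌉₊ ∧ x ≤ (⌈x ^ (1 / 3 : ℝ)⌉₊ : ℝ) ^ 3 ∧
      (⌈x ^ (1 / 3 : ℝ)⌉₊ : ℝ) ^ 3 ≤ 8 * x := by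
  have h1 : 1 ≤ x ^ (1 / 3 : ℝ) := Real.one_le_rpow hx (by norm_num)
  have hcube : (x ^ (1 / 3 : ℝ)) ^ 3 = x := by
    rw [← Real.rpow_natCast, ← Real.rpow_mul (by linarith)]; norm_num
  have hle := Nat.le_ceil (x ^ (1 / 3 : ℝ))
  have hlt := Nat.ceil_lt_add_one (zero_le_one.trans h1)
  refine ⟨Nat.one_le_ceil_iff.2 (by linarith), ?_, ?_⟩
  · calc x = (x ^ (1 / 3 : ℝ)) ^ 3 := hcube.symm
      _ ≤ _ := by gcongr
  · calc (⌈x ^ (1 / 3 : ℝ)⌉₊ : ℝ) ^ 3 ≤ (2 * x ^ (1 / 3 : ℝ)) ^ 3 := by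
          gcongr; linarith
      _ = 8 * x := by rw [mul_pow, hcube]; norm_num

lemma exists_sum_range_le_mul_pow_div {f ψ : ℕ → ℝ} (hψ : ∀ᶠ j in atTop, 1 ≤ ψ j)
    (hdouble : ∀ᶠ j in atTop, ψ (j + 1) ≤ 2 * ψ j)
    (hf : ∀ᶠ j in atTop, f j ≤ 8 ^ j / ψ j) :
    ∃ C : ℝ, 0 < C ∧ ∀ᶠ j in atTop, ∑ i ∈ Finset.range (j + 1), f i ≤ C * (8 ^ j / ψ j) := by
  obtain ⟨J, hJ⟩ := eventually_atTop.1 (hψ.and (hdouble.and hf))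
  set S := ∑ i ∈ Finset.range (J + 1), f i with hS
  have hpos : ∀ j ≥ J, 0 < (8 : ℝ) ^ j / ψ j := fun j hj =>
    div_pos (by positivity) (zero_lt_one.trans_le (hJ j hj).1)
  set C : ℝ := max 2 (S / (8 ^ J / ψ J)) with hC
  have hC2 : 2 ≤ C := le_max_left _ _
  refine ⟨C, by linarith, eventually_atTop.2 ⟨J, fun j hj => ?_⟩⟩
  induction j, hj using Nat.le_induction with
  | base => exact (div_le_iff₀ (hpos J le_rfl)).1 (le_max_right _ _)
  | succ j hj ih =>
    rw [Finset.sum_range_succ]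
    have h1 := (hJ (j + 1) (by omega)).2.2
    have hψj := zero_lt_one.trans_le (hJ j hj).1
    have hψj1 := zero_lt_one.trans_le (hJ (j + 1) (by omega)).1
    have h2 : (8 : ℝ) ^ j / ψ j ≤ 1 / 4 * (8 ^ (j + 1) / ψ (j + 1)) := by
      rw [← mul_div_assoc, div_le_div_iff₀ hψj hψj1, pow_succ]
      have := mul_le_mul_of_nonneg_left (hJ j hj).2.1 (show (0 : ℝ) ≤ 8 ^ j by positivity)
      linarith
    have h3 := hpos (j + 1) (by omega)
    have h4 := mul_le_mul_of_nonneg_left h2 (show 0 ≤ C by linarith)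
    nlinarith

theorem exists_seq_energy_of_not_summable {ψ : ℕ → ℝ} (hψ : ∀ᶠ j in atTop, 1 ≤ ψ j)
    (hmono : ∀ᶠ j in atTop, ψ j ≤ ψ (j + 1)) (hdouble : ∀ᶠ j in atTop, ψ (j + 1) ≤ 2 * ψ j)
    (hsmall : ∀ᶠ j in atTop, 1536 * ψ j ≤ 2 ^ j) (hsum : ¬ Summable fun j => 1 / ψ j) :
    ∃ a : ℕ → ℕ, (∀ n, 1 ≤ n → a n < a (n + 1)) ∧ 0 < a 1 ∧
      (∃ C₁ : ℝ, 0 < C₁ ∧ ∃ C₂ : ℝ, 0 < C₂ ∧ ∀ᶠ j : ℕ in atTop, ∀ N : ℕ, 2 ^ j ≤ N →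
        N < 2 ^ (j + 1) → C₁ * (8 ^ j / ψ j) ≤ (addEnergy (trunc a N) : ℝ) ∧
        (addEnergy (trunc a N) : ℝ) ≤ C₂ * (8 ^ j / ψ j)) ∧
      volume (NPPC a) = 1 := by
  set K : ℕ → ℕ := fun j => ⌈ψ j ^ (1 / 3 : ℝ)⌉₊ with hKdef
  set m : ℕ → ℕ := fun j => 2 ^ j / (2 * K j) with hmdef
  have hK : ∀ᶠ j in atTop, 1 ≤ K j ∧ ψ j ≤ (K j : ℝ) ^ 3 ∧ (K j : ℝ) ^ 3 ≤ 8 * ψ j := by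
    filter_upwards [hψ] with j hj using ceil_rpow_cube_bounds hj
  have hKj : ∀ᶠ j in atTop, 192 * K j ^ 3 ≤ 2 ^ j := by
    filter_upwards [hK, hsmall] with j h1 h2
    have : 192 * (K j : ℝ) ^ 3 ≤ 2 ^ j := by linarith [h1.2.2]
    exact_mod_cast this
  refine ⟨blockSeq m, fun n hn => blockSeq_lt_succ hn,
    (groupScale_pos _).trans_le (groupScale_le_blockSeq le_rfl), ?_, ?_⟩
  · have hf : ∀ᶠ j in atTop, ((2 * m j : ℕ) : ℝ) ^ 3 ≤ 8 ^ j / ψ j := by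
      filter_upwards [hψ, hK] with j h1 h2
      have h3 : 2 * K j * m j ≤ 2 ^ j := Nat.mul_div_le _ _
      have h3' : (2 * K j * m j : ℝ) ≤ 2 ^ j := by exact_mod_cast h3
      rw [le_div_iff₀ (by linarith)]
      calc ((2 * m j : ℕ) : ℝ) ^ 3 * ψ j ≤ ((2 * m j : ℕ) : ℝ) ^ 3 * (K j : ℝ) ^ 3 := by
            gcongr; exact h2.2.1
        _ = (2 * K j * m j : ℝ) ^ 3 := by push_cast; ring
        _ ≤ (2 ^ j) ^ 3 := by gcongr
        _ = 8 ^ j := by rw [← pow_mul, mul_comm, pow_mul]; norm_num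
    obtain ⟨C, hC, hCsum⟩ := exists_sum_range_le_mul_pow_div hψ hdouble hf
    refine ⟨1 / 4096, by norm_num, 8 + C, by linarith, ?_⟩
    have hlower : ∀ᶠ j in atTop, ∀ N : ℕ, 2 ^ (j + 1) ≤ N →
        1 / 4096 * (8 ^ (j + 1) / ψ (j + 1)) ≤ (addEnergy (trunc (blockSeq m) N) : ℝ) := by
      filter_upwards [hψ, hK, hKj, hmono] with j h1 h2 h3 h4 N hN
      have h5 : 2 ^ j ≤ 4 * K j * m j := two_pow_le_four_mul_mul h2.1 h3 rfl
      have h5' : (2 : ℝ) ^ j ≤ 4 * K j * m j := by exact_mod_cast h5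
      have h6 : 2 * m j ≤ 2 ^ j := by
        have h7 : 2 * K j * m j ≤ 2 ^ j := Nat.mul_div_le _ _
        nlinarith [h2.1]
      have h7 : (m j : ℝ) ^ 3 ≤ addEnergy (trunc (blockSeq m) N) := by
        exact_mod_cast cube_le_addEnergy_trunc_blockSeq h6 hN
      refine le_trans ?_ h7
      have hψ1 : 0 < ψ (j + 1) := by linarith
      rw [← mul_div_assoc, div_le_iff₀ hψ1]
      have h8 : (8 : ℝ) ^ j ≤ 512 * (m j : ℝ) ^ 3 * ψ (j + 1) :=
        calc (8 : ℝ) ^ j = (2 ^ j) ^ 3 := by rw [← pow_mul, mul_comm j 3, pow_mul]; norm_num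
          _ ≤ (4 * K j * m j) ^ 3 := by gcongr
          _ = 64 * (m j : ℝ) ^ 3 * (K j : ℝ) ^ 3 := by ring
          _ ≤ 64 * (m j : ℝ) ^ 3 * (8 * ψ (j + 1)) := by gcongr; linarith [h2.2.2]
          _ = 512 * (m j : ℝ) ^ 3 * ψ (j + 1) := by ring
      rw [pow_succ]
      linarith
    have hlower' : ∀ᶠ j in atTop, ∀ N : ℕ, 2 ^ j ≤ N →
        1 / 4096 * (8 ^ j / ψ j) ≤ (addEnergy (trunc (blockSeq m) N) : ℝ) := by
      obtain ⟨J, hJ⟩ := eventually_atTop.1 hlower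
      refine eventually_atTop.2 ⟨J + 1, fun j hj => ?_⟩
      obtain ⟨i, rfl⟩ : ∃ i, j = i + 1 := ⟨j - 1, by omega⟩
      exact hJ i (by omega)
    filter_upwards [hlower', hCsum, hψ, hsmall] with j h1 h2 h3 h4 N hN1 hN2
    refine ⟨h1 N hN1, ?_⟩
    have h5 : (addEnergy (trunc (blockSeq m) N) : ℝ) ≤
        2 * (N : ℝ) ^ 2 + ∑ i ∈ Finset.range (j + 1), ((2 * m i : ℕ) : ℝ) ^ 3 := by
      exact_mod_cast addEnergy_trunc_blockSeq_le hN2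
    have hN2' : (N : ℝ) ≤ 2 * 2 ^ j := by
      rw [← pow_succ']; exact_mod_cast hN2.le
    have h6 : (N : ℝ) ^ 2 ≤ 4 * (8 ^ j / ψ j) := by
      rw [← mul_div_assoc, le_div_iff₀ (by linarith)]
      calc (N : ℝ) ^ 2 * ψ j ≤ (2 * 2 ^ j) ^ 2 * 2 ^ j := by gcongr; linarith
        _ = 4 * (2 ^ j) ^ 3 := by ring
        _ = 4 * 8 ^ j := by rw [← pow_mul, mul_comm j 3, pow_mul]; norm_num
    linarith
  · have hcells : ∀ j, ∃ B ⊆ Finset.range (blockRatio j),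
        (1 ≤ K j → 192 * K j ^ 3 ≤ 2 ^ j →
          1 / (36864 * (K j : ℝ) ^ 3) ≤ (B.card : ℝ) / blockRatio j) ∧
        ∀ α : ℝ, 0 ≤ α → ⌊α * groupScale (2 ^ (j + 1))⌋₊ % blockRatio j ∈ B →
          3 ≤ pcf (blockSeq m) 1 α (2 ^ (j + 1)) := by
      intro j
      by_cases h : 1 ≤ K j ∧ 192 * K j ^ 3 ≤ 2 ^ j
      · obtain ⟨B, hB, hcard, hgood⟩ := exists_block_cells h.1 h.2 (m := m) rfl
        exact ⟨B, hB, fun _ _ => hcard, hgood⟩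
      · exact ⟨∅, by simp, fun h1 h2 => absurd ⟨h1, h2⟩ h, by simp⟩
    choose B hB hcard hgood using hcells
    have hns : ¬ Summable fun j => ((B j).card : ℝ) / blockRatio j := by
      intro hs
      refine hsum ?_
      have hs' := hs.mul_left 294912
      refine hs'.of_norm_bounded_eventually_nat ?_
      filter_upwards [hK, hKj, hψ] with j h1 h2 h3
      have h4 := hcard j h1.1 h2
      have hK0 : (0 : ℝ) < K j := by exact_mod_cast h1.1
      rw [Real.norm_of_nonneg (by positivity)]
      have h5 : 1 / (294912 * ψ j) ≤ 1 / (36864 * (K j : ℝ) ^ 3) := by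
        apply one_div_le_one_div_of_le (by positivity)
        linarith [h1.2.2]
      calc 1 / ψ j = 294912 * (1 / (294912 * ψ j)) := by field_simp
        _ ≤ 294912 * (((B j).card : ℝ) / blockRatio j) := by linarith
    have hnull := volume_digits_avoid_eq_zero (δ := fun j => groupScale (2 ^ j))
      groupScale_two_pow_succ (fun _ => groupScale_pos _) blockRatio_pos hB hns
    set T := {α : ℝ | α ∈ Set.Ico (0 : ℝ) 1 ∧
      ∃ i, ∀ j, i ≤ j → ⌊α * groupScale (2 ^ (j + 1))⌋₊ % blockRatio j ∉ B j} with hT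
    have hsub : Set.Ioo (0 : ℝ) 1 \ T ⊆ NPPC (blockSeq m) := by
      rintro α ⟨hα, hαT⟩
      refine ⟨hα, fun hppc => hαT ⟨⟨hα.1.le, hα.2⟩, ?_⟩⟩
      have hlim := hppc 1 zero_le_one
      have hev : ∀ᶠ N in atTop, pcf (blockSeq m) 1 α N < 3 :=
        hlim.eventually_lt_const (by norm_num)
      obtain ⟨N₀, hN₀⟩ := eventually_atTop.1 hev
      refine ⟨N₀, fun j hj hmem => ?_⟩
      have h1 := hgood j α hα.1.le hmem
      have h2 := hN₀ (2 ^ (j + 1)) (by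
        have : j + 1 < 2 ^ (j + 1) := Nat.lt_two_pow_self
        omega)
      linarith
    refine le_antisymm ?_ ?_
    · calc volume (NPPC (blockSeq m)) ≤ volume (Set.Ioo (0 : ℝ) 1) :=
            measure_mono fun α hα => hα.1
        _ = 1 := by simp
    · calc (1 : ENNReal) = volume (Set.Ioo (0 : ℝ) 1 \ T) := by
            rw [measure_sdiff_null hnull]; simp
        _ ≤ _ := measure_mono hsub

end Construction

section IteratedLog

lemma iterLog_succ (k : ℕ) (x : ℝ) : iterLog (k + 1) x = Real.log (iterLog k x) := by
  induction k generalizing x with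
  | zero => rfl
  | succ k ih => exact ih (Real.log x)

lemma tendsto_iterLog_atTop (k : ℕ) : Tendsto (iterLog k) atTop atTop := by
  induction k with
  | zero => exact tendsto_id
  | succ k ih => exact ih.comp Real.tendsto_log_atTop

lemma eventually_iterLog_mono (k : ℕ) :
    ∀ᶠ x in atTop, ∀ y, x ≤ y → iterLog k x ≤ iterLog k y := by
  induction k with
  | zero => exact Eventually.of_forall fun x y h => h
  | succ k ih =>
    filter_upwards [ih, (tendsto_iterLog_atTop k).eventually_gt_atTop 0] with x h1 h2 y hxy
    rw [iterLog_succ, iterLog_succ]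
    exact Real.log_le_log h2 (h1 y hxy)

lemma eventually_iterLog_two_mul_le {c : ℝ} (hc : 1 < c) (k : ℕ) :
    ∀ᶠ x in atTop, iterLog (k + 1) (2 * x) ≤ c * iterLog (k + 1) x := by
  have key : ∀ {b : ℝ}, 0 < b → ∀ᶠ y in atTop, Real.log (b * y) ≤ c * Real.log y := by
    intro b hb
    filter_upwards [eventually_gt_atTop 0,
      Real.tendsto_log_atTop.eventually_ge_atTop (Real.log b / (c - 1))] with y hy h
    rw [Real.log_mul hb.ne' hy.ne']
    rw [div_le_iff₀ (by linarith)] at h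
    linarith
  induction k with
  | zero => exact key two_pos
  | succ k ih =>
    have h2 : Tendsto (fun x : ℝ => 2 * x) atTop atTop :=
      tendsto_id.const_mul_atTop two_pos
    filter_upwards [ih, (tendsto_iterLog_atTop (k + 1)).eventually
      (key (zero_lt_one.trans hc)),
      ((tendsto_iterLog_atTop (k + 1)).comp h2).eventually_gt_atTop 0] with x h3 h4 h5
    rw [iterLog_succ, iterLog_succ (k + 1) x]
    exact (Real.log_le_log h5 h3).trans h4

lemma eventually_iterLog_le_log (k : ℕ) :
    ∀ᶠ x in atTop, iterLog (k + 1) x ≤ Real.log x := by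
  induction k with
  | zero => exact Eventually.of_forall fun x => le_rfl
  | succ k ih =>
    filter_upwards [ih, (tendsto_iterLog_atTop (k + 1)).eventually_ge_atTop 0] with x h1 h2
    rw [iterLog_succ]
    exact (Real.log_le_self h2).trans h1

lemma eventually_one_le_iterLog (r : ℕ) :
    ∀ᶠ x in atTop, ∀ k ∈ Finset.Icc 1 r, 1 ≤ iterLog k x :=
  (Finset.eventually_all _).2 fun k _ => (tendsto_iterLog_atTop k).eventually_ge_atTop 1

lemma eventually_prod_iterLog_mono (r : ℕ) :
    ∀ᶠ x in atTop, ∀ y, x ≤ y →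
      ∏ k ∈ Finset.Icc 1 r, iterLog k x ≤ ∏ k ∈ Finset.Icc 1 r, iterLog k y := by
  have h : ∀ᶠ x in atTop, ∀ k ∈ Finset.Icc 1 r, ∀ y, x ≤ y → iterLog k x ≤ iterLog k y :=
    (Finset.eventually_all _).2 fun k _ => eventually_iterLog_mono k
  filter_upwards [h, eventually_one_le_iterLog r] with x h1 h2 y hxy
  exact Finset.prod_le_prod (fun k hk => zero_le_one.trans (h2 k hk)) fun k hk => h1 k hk y hxy

lemma eventually_prod_iterLog_two_mul_le (r : ℕ) :
    ∀ᶠ x in atTop,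
      ∏ k ∈ Finset.Icc 1 r, iterLog k (2 * x) ≤ 2 * ∏ k ∈ Finset.Icc 1 r, iterLog k x := by
  rcases Nat.eq_zero_or_pos r with rfl | hr
  · simp
  set c : ℝ := 2 ^ (1 / r : ℝ) with hc
  have hr' : (0 : ℝ) < r := by exact_mod_cast hr
  have hc1 : 1 < c := Real.one_lt_rpow one_lt_two (by positivity)
  have hcr : c ^ r = 2 := by
    rw [hc, ← Real.rpow_natCast, ← Real.rpow_mul two_pos.le, one_div_mul_cancel hr'.ne',
      Real.rpow_one]
  have h : ∀ᶠ x in atTop, ∀ k ∈ Finset.Icc 1 r, iterLog k (2 * x) ≤ c * iterLog k x :=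
    (Finset.eventually_all _).2 fun k hk => by
      obtain ⟨i, rfl⟩ : ∃ i, k = i + 1 := ⟨k - 1, by rw [Finset.mem_Icc] at hk; omega⟩
      exact eventually_iterLog_two_mul_le hc1 i
  have h2 : Tendsto (fun x : ℝ => 2 * x) atTop atTop := tendsto_id.const_mul_atTop two_pos
  filter_upwards [h, h2.eventually (eventually_one_le_iterLog r)] with x h3 h4
  calc ∏ k ∈ Finset.Icc 1 r, iterLog k (2 * x) ≤ ∏ k ∈ Finset.Icc 1 r, (c * iterLog k x) :=
        Finset.prod_le_prod (fun k hk => zero_le_one.trans (h4 k hk)) h3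
    _ = 2 * ∏ k ∈ Finset.Icc 1 r, iterLog k x := by
        rw [Finset.prod_mul_distrib, Finset.prod_const, Nat.card_Icc, Nat.add_sub_cancel, hcr]

lemma eventually_mul_prod_iterLog_le (r : ℕ) {c : ℝ} (hc : 0 < c) :
    ∀ᶠ x in atTop, c * ∏ k ∈ Finset.Icc 1 r, iterLog k x ≤ x := by
  have h : ∀ᶠ x in atTop, ∀ k ∈ Finset.Icc 1 r, iterLog k x ≤ Real.log x :=
    (Finset.eventually_all _).2 fun k hk => by
      obtain ⟨i, rfl⟩ : ∃ i, k = i + 1 := ⟨k - 1, by rw [Finset.mem_Icc] at hk; omega⟩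
      exact eventually_iterLog_le_log i
  have hlog := (Real.isLittleO_pow_log_id_atTop (n := r)).bound (inv_pos.2 hc)
  filter_upwards [h, eventually_one_le_iterLog r, hlog, eventually_ge_atTop 0] with x h1 h2 h3 h4
  have h5 : ∏ k ∈ Finset.Icc 1 r, iterLog k x ≤ Real.log x ^ r :=
    calc ∏ k ∈ Finset.Icc 1 r, iterLog k x ≤ ∏ _k ∈ Finset.Icc 1 r, Real.log x :=
          Finset.prod_le_prod (fun k hk => zero_le_one.trans (h2 k hk)) h1
      _ = Real.log x ^ r := by rw [Finset.prod_const, Nat.card_Icc, Nat.add_sub_cancel]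
  have h6 : Real.log x ^ r ≤ c⁻¹ * x := by
    refine (le_abs_self _).trans (h3.trans_eq ?_)
    rw [id, Real.norm_of_nonneg h4]
  calc c * ∏ k ∈ Finset.Icc 1 r, iterLog k x ≤ c * (c⁻¹ * x) := by gcongr; exact h5.trans h6
    _ = x := by field_simp

lemma tendsto_two_pow_atTop : Tendsto (fun j : ℕ => (2 : ℝ) ^ j) atTop atTop :=
  tendsto_pow_atTop_atTop_of_one_lt one_lt_two

lemma eventually_iterLog_two_pow_succ_sub_le (r : ℕ) :
    ∀ᶠ j : ℕ in atTop, iterLog (r + 1) (2 ^ (j + 1)) - iterLog (r + 1) (2 ^ j) ≤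
      1 / ∏ k ∈ Finset.Icc 1 r, iterLog k (2 ^ j) := by
  induction r with
  | zero =>
    refine Eventually.of_forall fun j => ?_
    have h : ∀ x, iterLog (0 + 1) x = Real.log x := fun x => rfl
    rw [h, h, Real.log_pow, Real.log_pow]
    push_cast
    simp only [Finset.Icc_eq_empty_of_lt zero_lt_one, Finset.prod_empty]
    linarith [Real.log_two_lt_d9]
  | succ r ih =>
    have hpos := tendsto_two_pow_atTop.eventually
      ((tendsto_iterLog_atTop (r + 1)).eventually_gt_atTop 0)
    have hpos' := (tendsto_add_atTop_nat 1).eventually hpos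
    filter_upwards [ih, hpos, hpos'] with j h1 h2 h3
    rw [iterLog_succ (r + 1), iterLog_succ (r + 1), ← Real.log_div h3.ne' h2.ne',
      Finset.prod_Icc_succ_top (by omega), ← one_div_mul_one_div, mul_one_div]
    calc Real.log (iterLog (r + 1) (2 ^ (j + 1)) / iterLog (r + 1) (2 ^ j))
        ≤ iterLog (r + 1) (2 ^ (j + 1)) / iterLog (r + 1) (2 ^ j) - 1 :=
          Real.log_le_sub_one_of_pos (div_pos h3 h2)
      _ = (iterLog (r + 1) (2 ^ (j + 1)) - iterLog (r + 1) (2 ^ j)) / iterLog (r + 1) (2 ^ j) := by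
          rw [sub_div, div_self h2.ne']
      _ ≤ _ := by gcongr

lemma not_summable_one_div_prod_iterLog (r : ℕ) :
    ¬ Summable fun j : ℕ => 1 / ∏ k ∈ Finset.Icc 1 r, iterLog k (2 ^ j) := by
  intro hs
  set u : ℕ → ℝ := fun j => iterLog (r + 1) (2 ^ j) with hu
  have hu_top : Tendsto u atTop atTop := (tendsto_iterLog_atTop (r + 1)).comp tendsto_two_pow_atTop
  have hmono : ∀ᶠ j in atTop, u j ≤ u (j + 1) := by
    filter_upwards [tendsto_two_pow_atTop.eventually (eventually_iterLog_mono (r + 1))] with j hj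
    exact hj _ (pow_le_pow_right₀ one_le_two (Nat.le_succ j))
  have hsu : Summable fun j => u (j + 1) - u j := by
    refine hs.of_norm_bounded_eventually_nat ?_
    filter_upwards [eventually_iterLog_two_pow_succ_sub_le r, hmono] with j h1 h2
    rwa [Real.norm_of_nonneg (sub_nonneg.2 h2)]
  have hlim := hsu.hasSum.tendsto_sum_nat
  simp only [Finset.sum_range_sub] at hlim
  exact not_tendsto_atTop_of_tendsto_nhds hlim (tendsto_atTop_add_const_right _ (-u 0) hu_top)

end IteratedLog

theorem full_measure_with_iterated_log_energy (r : ℕ) (hr : 1 ≤ r) :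
    ∃ a : ℕ → ℕ, (∀ n, 1 ≤ n → a n < a (n + 1)) ∧ 0 < a 1 ∧
      (∃ C₁ : ℝ, 0 < C₁ ∧ ∃ C₂ : ℝ, 0 < C₂ ∧ ∀ᶠ N : ℕ in atTop,
        C₁ * ((N : ℝ) ^ 3 / ∏ k ∈ Finset.Icc 1 r, iterLog k (N : ℝ)) ≤
            (addEnergy (trunc a N) : ℝ) ∧
        (addEnergy (trunc a N) : ℝ) ≤
            C₂ * ((N : ℝ) ^ 3 / ∏ k ∈ Finset.Icc 1 r, iterLog k (N : ℝ))) ∧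
      volume (NPPC a) = 1 := by
  set P : ℝ → ℝ := fun x => ∏ k ∈ Finset.Icc 1 r, iterLog k x with hP
  have hone : ∀ᶠ x in atTop, 1 ≤ P x := by
    filter_upwards [eventually_one_le_iterLog r] with x hx
    calc (1 : ℝ) = ∏ _k ∈ Finset.Icc 1 r, (1 : ℝ) := by simp
      _ ≤ P x := Finset.prod_le_prod (fun _ _ => zero_le_one) hx
  have hone' := tendsto_two_pow_atTop.eventually hone
  have hmono' := tendsto_two_pow_atTop.eventually (eventually_prod_iterLog_mono r)
  have hdouble' : ∀ᶠ j : ℕ in atTop, P (2 ^ (j + 1)) ≤ 2 * P (2 ^ j) := by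
    filter_upwards [tendsto_two_pow_atTop.eventually (eventually_prod_iterLog_two_mul_le r)]
      with j hj
    rwa [pow_succ']
  have hsmall' := tendsto_two_pow_atTop.eventually
    (eventually_mul_prod_iterLog_le r (c := 1536) (by norm_num))
  obtain ⟨a, ha, ha1, ⟨C₁, hC₁, C₂, hC₂, hE⟩, hvol⟩ :=
    exists_seq_energy_of_not_summable (ψ := fun j => P (2 ^ j)) hone'
      (by filter_upwards [hmono'] with j hj using hj _ (pow_le_pow_right₀ one_le_two j.le_succ))
      hdouble' hsmall' (not_summable_one_div_prod_iterLog r)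
  refine ⟨a, ha, ha1, ⟨C₁ / 8, by positivity, 2 * C₂, by positivity, ?_⟩, hvol⟩
  have hall := hE.and (hone'.and (hmono'.and hdouble'))
  have hlog : Tendsto (Nat.log 2) atTop atTop :=
    tendsto_atTop.2 fun b => (eventually_ge_atTop (2 ^ b)).mono fun N hN =>
      Nat.le_log_of_pow_le one_lt_two hN
  filter_upwards [hlog.eventually hall,
    tendsto_natCast_atTop_atTop.eventually (eventually_prod_iterLog_mono r),
    eventually_ge_atTop 1] with N hN hNmono hN1
  obtain ⟨hNE, hψ, hm, hd⟩ := hN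
  have hl : 2 ^ Nat.log 2 N ≤ N := Nat.pow_log_le_self 2 (by omega)
  have hu : N < 2 ^ (Nat.log 2 N + 1) := Nat.lt_pow_succ_log_self one_lt_two N
  obtain ⟨hlow, hup⟩ := hNE N hl hu
  set j := Nat.log 2 N with hj
  have hl' : (2 : ℝ) ^ j ≤ N := by exact_mod_cast hl
  have hu' : (N : ℝ) ≤ 2 ^ (j + 1) := by exact_mod_cast hu.le
  have hP1 : P (2 ^ j) ≤ P N := hm _ hl'
  have hP2 : P N ≤ 2 * P (2 ^ j) := (hNmono _ hu').trans hd
  have h8 : ((2 : ℝ) ^ j) ^ 3 = 8 ^ j := by rw [← pow_mul, mul_comm, pow_mul]; norm_num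
  have hcube1 : (8 : ℝ) ^ j ≤ N ^ 3 := by rw [← h8]; gcongr
  have hcube2 : (N : ℝ) ^ 3 ≤ 8 * 8 ^ j := by
    calc (N : ℝ) ^ 3 ≤ (2 ^ (j + 1)) ^ 3 := by gcongr
      _ = 8 * 8 ^ j := by rw [← h8, pow_succ]; ring
  have hψ0 : 0 < P (2 ^ j) := by linarith
  have hPN : 0 < P N := by linarith
  constructor
  · refine le_trans ?_ hlow
    have : (N : ℝ) ^ 3 / P N ≤ 8 * (8 ^ j / P (2 ^ j)) := by
      rw [← mul_div_assoc]; gcongr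
    calc C₁ / 8 * ((N : ℝ) ^ 3 / P N) ≤ C₁ / 8 * (8 * (8 ^ j / P (2 ^ j))) := by gcongr
      _ = C₁ * (8 ^ j / P (2 ^ j)) := by ring
  · refine hup.trans ?_
    have : (8 : ℝ) ^ j / P (2 ^ j) ≤ 2 * (N ^ 3 / P N) := by
      rw [← mul_div_assoc, div_le_div_iff₀ hψ0 hPN]
      calc (8 : ℝ) ^ j * P N ≤ N ^ 3 * (2 * P (2 ^ j)) := by gcongr
        _ = 2 * N ^ 3 * P (2 ^ j) := by ring
    calc C₂ * (8 ^ j / P (2 ^ j)) ≤ C₂ * (2 * (N ^ 3 / P N)) := by gcongr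
      _ = 2 * C₂ * (N ^ 3 / P N) := by ring
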